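/- Let (A_n) be a sequence of pairwise disjoint measurable subsets of [0,1] with μ(A_n) > 0, and define T: L_1[0,1] → L_q[0,1] (1 < q < ∞) by Tf = Σ_{n=1}^∞ (∫_{A_n} f dμ) r_n, where r_n is the n-th Rademacher function. Then T is a bounded linear operator, T is not compact (the normalized indicators μ(A_n)^{-1} χ_{A_n} are mapped to r_n, which has no convergent subsequence in L_q), and T is strictly singular. -/

import Mathlib

open MeasureTheory ENNReal Filter Set

/-- Lebesgue measure on `[0,1]`. -/
noncomputable def μ01 : Measure ℝ := volume.restrict (Set.Icc 0 1)

instance : Fact (volume (Set.Icc (0:ℝ) 1) < ∞) := ⟨by simp⟩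
instance : IsFiniteMeasure μ01 := ⟨by simp [μ01]⟩

/-- The `n`-th Rademacher function `r_n(t) = sign (sin (2^n π t))`. -/
noncomputable def rademacher (n : ℕ) (t : ℝ) : ℝ :=
  Real.sign (Real.sin (2 ^ n * Real.pi * t))

/-- An operator is strictly singular if it is bounded below on no infinite-dimensional
closed subspace. -/
def StrictlySingular {E F : Type*} [NormedAddCommGroup E] [NormedSpace ℝ E]
    [NormedAddCommGroup F] [NormedSpace ℝ F] (T : E →L[ℝ] F) : Prop :=
  ∀ Y : Submodule ℝ E, IsClosed (Y : Set E) → ¬ FiniteDimensional ℝ Y →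
    ¬ ∃ c : ℝ, 0 < c ∧ ∀ y ∈ Y, c * ‖y‖ ≤ ‖T y‖


namespace S18

lemma abs_rad_le (n : ℕ) (t : ℝ) : |rademacher n t| ≤ 1 := by
  unfold rademacher
  rcases Real.sign_apply_eq (Real.sin (2 ^ n * Real.pi * t)) with h | h | h <;> rw [h] <;> simp

lemma rad_cases (n : ℕ) (t : ℝ) :
    rademacher n t = -1 ∨ rademacher n t = 0 ∨ rademacher n t = 1 :=
  Real.sign_apply_eq _

lemma measurable_sign : Measurable Real.sign := by
  unfold Real.sign
  exact Measurable.ite measurableSet_Iio measurable_const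
    (Measurable.ite measurableSet_Ioi measurable_const measurable_const)

lemma measurable_rad (n : ℕ) : Measurable (rademacher n) := by
  unfold rademacher
  exact measurable_sign.comp (by fun_prop)

instance : IsProbabilityMeasure μ01 := ⟨by simp [μ01]⟩

lemma rad_shift_self (n : ℕ) (t : ℝ) : rademacher n (t + (2 ^ n)⁻¹) = - rademacher n t := by
  unfold rademacher
  have : (2:ℝ) ^ n * Real.pi * (t + (2 ^ n)⁻¹) = 2 ^ n * Real.pi * t + Real.pi := by
    field_simp
  rw [this, Real.sin_add_pi, Real.sign_neg]

lemma rad_shift_lt {n m : ℕ} (h : n < m) (t : ℝ) :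
    rademacher m (t + (2 ^ n)⁻¹) = rademacher m t := by
  unfold rademacher
  obtain ⟨k, rfl⟩ := Nat.exists_eq_add_of_lt h
  have : (2:ℝ) ^ (n + k + 1) * Real.pi * (t + (2 ^ n)⁻¹)
      = 2 ^ (n + k + 1) * Real.pi * t + (2 ^ k : ℕ) * (2 * Real.pi) := by
    push_cast
    rw [pow_succ, pow_add]
    field_simp
  rw [this, Real.sin_add_nat_mul_two_pi]

lemma integrable_of_bdd {g : ℝ → ℝ} (hg : Measurable g) (C : ℝ) (h : ∀ t, |g t| ≤ C) :
    Integrable g μ01 :=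
  Integrable.of_bound hg.aestronglyMeasurable C (Eventually.of_forall h)

lemma abs_rad_mul_le (n m : ℕ) (t : ℝ) : |rademacher n t * rademacher m t| ≤ 1 := by
  rw [abs_mul]
  exact mul_le_one₀ (abs_rad_le n t) (abs_nonneg _) (abs_rad_le m t)

lemma integral_rad_lt {n m : ℕ} (h : n < m) :
    ∫ t, rademacher (n + 1) t * rademacher (m + 1) t ∂μ01 = 0 := by
  set G : ℝ → ℝ := fun t => rademacher (n + 1) t * rademacher (m + 1) t with hG
  set d : ℝ := (2 ^ (n + 1))⁻¹ with hd
  have hGm : Measurable G := (measurable_rad _).mul (measurable_rad _)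
  have hshift : ∀ t, G (t + d) = - G t := by
    intro t
    simp only [hG, hd]
    rw [rad_shift_self, rad_shift_lt (by omega)]; ring
  have hii : ∀ a b, IntervalIntegrable G volume a b := by
    intro a b
    refine (intervalIntegrable_const (c := (1:ℝ))).mono_fun hGm.aestronglyMeasurable ?_
    refine Eventually.of_forall fun t => ?_
    rw [norm_one]
    exact abs_rad_mul_le (n+1) (m+1) t
  have hper : Function.Periodic G (2 * d) := by
    intro t
    rw [two_mul, ← add_assoc, hshift, hshift, neg_neg]
  have h2 : ∫ t in (0:ℝ)..(2 * d), G t = 0 := by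
    rw [← intervalIntegral.integral_add_adjacent_intervals (hii 0 d) (hii d (2 * d))]
    have : ∫ t in d..(2 * d), G t = ∫ t in (0:ℝ)..d, G (t + d) := by
      rw [intervalIntegral.integral_comp_add_right]; congr 1 <;> ring
    rw [this]
    simp [hshift]
  have h1 : ∫ t in (0:ℝ)..1, G t = 0 := by
    have := hper.intervalIntegral_add_zsmul_eq (2 ^ n : ℕ) 0 (fun a b => hii a b)
    simp only [zero_add, h2, smul_zero] at this
    convert this using 2
    simp [hd, pow_succ]
  unfold μ01
  rw [integral_Icc_eq_integral_Ioc, ← intervalIntegral.integral_of_le zero_le_one]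
  exact h1

lemma rad_sq_ae (n : ℕ) : ∀ᵐ t ∂μ01, rademacher n t * rademacher n t = 1 := by
  unfold μ01
  apply ae_restrict_of_ae
  have hc : (Set.range fun k : ℤ => (k : ℝ) / 2 ^ n).Countable := Set.countable_range _
  filter_upwards [hc.ae_notMem volume] with t ht
  have hs : Real.sin (2 ^ n * Real.pi * t) ≠ 0 := by
    intro h0
    obtain ⟨k, hk⟩ := Real.sin_eq_zero_iff.mp h0
    apply ht
    refine ⟨k, ?_⟩
    have := Real.pi_pos
    have h3 : (k:ℝ) = 2 ^ n * t := by
      apply mul_right_cancel₀ this.ne'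
      rw [hk]; ring
    simp only [h3]
    field_simp
  unfold rademacher
  rcases Real.sign_apply_eq_of_ne_zero _ hs with h | h <;> rw [h] <;> norm_num

lemma integral_rad (n m : ℕ) :
    ∫ t, rademacher (n + 1) t * rademacher (m + 1) t ∂μ01 = if n = m then 1 else 0 := by
  rcases lt_trichotomy n m with h | h | h
  · rw [integral_rad_lt h, if_neg h.ne]
  · subst h
    rw [integral_congr_ae (rad_sq_ae (n + 1))]
    simp
  · simp_rw [mul_comm (rademacher (n + 1) _)]
    rw [integral_rad_lt h, if_neg h.ne']

/-- The Rademacher series. -/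
noncomputable def G (a : ℕ → ℝ) (t : ℝ) : ℝ := ∑' n, a n * rademacher (n + 1) t

lemma term_le (a : ℕ → ℝ) (n : ℕ) (t : ℝ) : ‖a n * rademacher (n + 1) t‖ ≤ |a n| := by
  rw [Real.norm_eq_abs, abs_mul]
  exact mul_le_of_le_one_right (abs_nonneg _) (abs_rad_le _ _)

lemma summable_term {a : ℕ → ℝ} (ha : Summable fun n => |a n|) (t : ℝ) :
    Summable fun n => a n * rademacher (n + 1) t :=
  Summable.of_norm_bounded ha fun n => term_le a n t

lemma abs_G_le {a : ℕ → ℝ} (ha : Summable fun n => |a n|) (t : ℝ) :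
    |G a t| ≤ ∑' n, |a n| :=
  tsum_of_norm_bounded ha.hasSum fun n => term_le a n t

lemma measurable_G {a : ℕ → ℝ} (ha : Summable fun n => |a n|) : Measurable (G a) := by
  refine measurable_of_tendsto_metrizable
    (f := fun N t => ∑ n ∈ Finset.range N, a n * rademacher (n + 1) t) ?_ ?_
  · intro N
    exact Finset.measurable_fun_sum _ fun n _ => (measurable_rad _).const_mul _
  · rw [tendsto_pi_nhds]
    intro t
    exact (summable_term ha t).hasSum.tendsto_sum_nat

lemma integral_G_mul {a : ℕ → ℝ} (ha : Summable fun n => |a n|) {h : ℝ → ℝ} (hm : Measurable h)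
    (C : ℝ) (hC : ∀ t, |h t| ≤ C) :
    ∫ t, G a t * h t ∂μ01 = ∑' n, a n * ∫ t, rademacher (n + 1) t * h t ∂μ01 := by
  have hb : ∀ n t, ‖a n * rademacher (n + 1) t * h t‖ ≤ |a n| * C := by
    intro n t
    rw [norm_mul]
    exact mul_le_mul (term_le a n t) (hC t) (norm_nonneg _) (abs_nonneg _)
  have hi : ∀ n, Integrable (fun t => a n * rademacher (n + 1) t * h t) μ01 := fun n =>
    integrable_of_bdd (((measurable_rad _).const_mul _).mul hm) _ (hb n)
  have := hasSum_integral_of_summable_integral_norm (μ := μ01)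
    (F := fun n t => a n * rademacher (n + 1) t * h t) hi ?_
  · have h2 := this.tsum_eq
    simp_rw [mul_assoc, integral_const_mul] at h2
    rw [h2]
    congr 1
    ext t
    rw [G, ← tsum_mul_right]
    simp_rw [mul_assoc]
  · refine Summable.of_nonneg_of_le (fun n => integral_nonneg fun t => norm_nonneg _) (fun n => ?_)
      (ha.mul_right C)
    calc _ ≤ ∫ t, |a n| * C ∂μ01 := integral_mono (hi n).norm (integrable_const _) (hb n)
      _ = _ := by simp

lemma integral_G_sq {a : ℕ → ℝ} (ha : Summable fun n => |a n|) :
    ∫ t, G a t * G a t ∂μ01 = ∑' n, a n * a n := by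
  rw [integral_G_mul ha (measurable_G ha) _ (abs_G_le ha)]
  congr 1; ext n
  congr 1
  simp_rw [mul_comm (rademacher (n + 1) _)]
  rw [integral_G_mul ha (measurable_rad (n + 1)) 1 (abs_rad_le (n + 1))]
  simp_rw [integral_rad]
  simp

/-- Coefficients. -/
noncomputable def cf (A : ℕ → Set ℝ) (f : Lp ℝ 1 μ01) (n : ℕ) : ℝ := ∫ x in A n, f x ∂μ01

lemma hasSum_cf_abs {A : ℕ → Set ℝ} (hAmeas : ∀ n, MeasurableSet (A n))
    (hAdisj : Pairwise fun i j => Disjoint (A i) (A j)) (f : Lp ℝ 1 μ01) :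
    (Summable fun n => |cf A f n|) ∧ ∑' n, |cf A f n| ≤ ‖f‖ := by
  have hf := L1.integrable_coeFn f
  have h := hasSum_integral_iUnion (μ := μ01) (f := fun x => ‖f x‖) hAmeas hAdisj
    hf.norm.integrableOn
  have hle : ∀ n, |cf A f n| ≤ ∫ x in A n, ‖f x‖ ∂μ01 := fun n =>
    norm_integral_le_integral_norm (μ := μ01.restrict (A n)) (fun x => f x)
  have hs : Summable fun n => |cf A f n| :=
    Summable.of_nonneg_of_le (fun n => abs_nonneg _) hle h.summable
  refine ⟨hs, (hs.tsum_le_tsum hle h.summable).trans ?_⟩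
  rw [h.tsum_eq, L1.norm_eq_integral_norm]
  exact setIntegral_le_integral hf.norm (Eventually.of_forall fun x => norm_nonneg _)

lemma cf_add (A : ℕ → Set ℝ) (f g : Lp ℝ 1 μ01) (n : ℕ) :
    cf A (f + g) n = cf A f n + cf A g n := by
  unfold cf
  rw [← integral_add (L1.integrable_coeFn f).integrableOn (L1.integrable_coeFn g).integrableOn]
  exact integral_congr_ae (ae_restrict_of_ae (Lp.coeFn_add f g))

lemma cf_smul (A : ℕ → Set ℝ) (c : ℝ) (f : Lp ℝ 1 μ01) (n : ℕ) :
    cf A (c • f) n = c * cf A f n := by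
  unfold cf
  rw [← integral_const_mul]
  exact integral_congr_ae (ae_restrict_of_ae (Lp.coeFn_smul c f))

/-- coefficient as a linear map. -/
noncomputable def cfL (A : ℕ → Set ℝ) (n : ℕ) : Lp ℝ 1 μ01 →ₗ[ℝ] ℝ where
  toFun f := cf A f n
  map_add' f g := cf_add A f g n
  map_smul' c f := cf_smul A c f n

lemma memLp_G {a : ℕ → ℝ} (ha : Summable fun n => |a n|) (p : ℝ≥0∞) : MemLp (G a) p μ01 :=
  MemLp.of_bound (measurable_G ha).aestronglyMeasurable _ (Eventually.of_forall (abs_G_le ha))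

lemma exists_T (p : ℝ≥0∞) [Fact (1 ≤ p)] {A : ℕ → Set ℝ} (hAmeas : ∀ n, MeasurableSet (A n))
    (hAdisj : Pairwise fun i j => Disjoint (A i) (A j)) :
    ∃ T : Lp ℝ 1 μ01 →L[ℝ] Lp ℝ p μ01, ∀ f, (T f : ℝ → ℝ) =ᵐ[μ01] G (cf A f) := by
  have hs := fun f => (hasSum_cf_abs hAmeas hAdisj f).1
  have hn := fun f => (hasSum_cf_abs hAmeas hAdisj f).2
  let L : Lp ℝ 1 μ01 →ₗ[ℝ] Lp ℝ p μ01 :=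
    { toFun := fun f => (memLp_G (hs f) p).toLp _
      map_add' := by
        intro f g
        rw [← MemLp.toLp_add]
        congr 1
        ext t
        simp only [G, Pi.add_apply, cf_add, add_mul]
        exact (summable_term (hs f) t).tsum_add (summable_term (hs g) t)
      map_smul' := by
        intro c f
        rw [RingHom.id_apply, ← MemLp.toLp_const_smul]
        congr 1
        ext t
        simp only [G, Pi.smul_apply, cf_smul, mul_assoc, smul_eq_mul]
        exact tsum_mul_left }
  refine ⟨L.mkContinuous 1 fun f => ?_, fun f => ?_⟩
  · have h1 : ‖L f‖ ≤ (measureUnivNNReal μ01 : ℝ) ^ p.toReal⁻¹ * ∑' n, |cf A f n| := by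
      refine Lp.norm_le_of_ae_bound (tsum_nonneg fun n => abs_nonneg _) ?_
      filter_upwards [MemLp.coeFn_toLp (memLp_G (hs f) p)] with t ht
      change ‖((memLp_G (hs f) p).toLp _ : ℝ → ℝ) t‖ ≤ _
      rw [ht]
      exact abs_G_le (hs f) t
    have h2 : measureUnivNNReal μ01 = 1 := by simp [measureUnivNNReal]
    rw [h2] at h1
    simp only [NNReal.coe_one, Real.one_rpow, one_mul] at h1 ⊢
    exact h1.trans (hn f)
  · exact MemLp.coeFn_toLp (memLp_G (hs f) p)

lemma norm_rpow {q : ℝ} (hq : 1 < q) [Fact (1 ≤ ENNReal.ofReal q)]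
    (F : Lp ℝ (ENNReal.ofReal q) μ01) {g : ℝ → ℝ} (h : (F : ℝ → ℝ) =ᵐ[μ01] g) :
    ‖F‖ ^ q = ∫ t, |g t| ^ q ∂μ01 := by
  have hq0 : 0 < q := by linarith
  rw [Lp.norm_def, (Lp.memLp F).eLpNorm_eq_integral_rpow_norm (by simpa using hq0) (by simp),
    ENNReal.toReal_ofReal hq0.le]
  have h0 : 0 ≤ ∫ t, ‖F t‖ ^ q ∂μ01 :=
    integral_nonneg fun t => Real.rpow_nonneg (norm_nonneg _) _
  rw [ENNReal.toReal_ofReal (Real.rpow_nonneg h0 _), Real.rpow_inv_rpow h0 hq0.ne']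
  apply integral_congr_ae
  filter_upwards [h] with t ht
  rw [ht, Real.norm_eq_abs]


lemma exists_vanishing {E : Type*} [NormedAddCommGroup E] [NormedSpace ℝ E] (Y : Submodule ℝ E)
    (hY : ¬ FiniteDimensional ℝ Y) (φ : ℕ → E →ₗ[ℝ] ℝ) (N : ℕ) :
    ∃ z ∈ Y, z ≠ 0 ∧ ∀ n < N, φ n z = 0 := by
  by_contra hcon
  push Not at hcon
  apply hY
  let L : Y →ₗ[ℝ] (Fin N → ℝ) := LinearMap.pi fun i => (φ i).comp Y.subtype
  refine FiniteDimensional.of_injective L ?_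
  rw [← LinearMap.ker_eq_bot, LinearMap.ker_eq_bot']
  intro y hy
  by_contra hne
  obtain ⟨n, hn, h⟩ := hcon y y.2 (by simpa using hne)
  exact h (congrFun hy ⟨n, hn⟩)

lemma gliding {E : Type*} [NormedAddCommGroup E] [NormedSpace ℝ E] (Y : Submodule ℝ E)
    (hY : ¬ FiniteDimensional ℝ Y) (φ : ℕ → E →ₗ[ℝ] ℝ)
    (hs : ∀ y, Summable fun n => |φ n y|)
    (hinj : ∀ y ∈ Y, y ≠ 0 → ∃ n, φ n y ≠ 0) (m : ℕ) :
    ∃ y ∈ Y, ∃ N : ℕ, (∀ n, |φ n y| ≤ 3) ∧ (m : ℝ) / 2 ≤ ∑ n ∈ Finset.range N, |φ n y| := by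
  induction m with
  | zero => exact ⟨0, Y.zero_mem, 0, by simp, by simp⟩
  | succ m ih =>
    obtain ⟨v, hvY, N, hv3, hvm⟩ := ih
    have ht := (hs v).tendsto_atTop_zero
    obtain ⟨N₁, hN₁⟩ := eventually_atTop.mp (ht.eventually_le_const (show (0:ℝ) < 1 / 2 by norm_num))
    set N' := max N N₁ with hN'
    obtain ⟨z, hzY, hz0, hzv⟩ := exists_vanishing Y hY φ N'
    obtain ⟨k, hk⟩ := hinj z hzY hz0
    have hbdd : BddAbove (Set.range fun n => |φ n z|) := by
      refine ⟨∑' n, |φ n z|, ?_⟩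
      rintro _ ⟨n, rfl⟩
      exact (hs z).le_tsum n fun _ _ => abs_nonneg _
    set S := ⨆ n, |φ n z| with hS
    have hle : ∀ n, |φ n z| ≤ S := fun n => le_ciSup hbdd n
    have hSpos : 0 < S := (abs_pos.mpr hk).trans_le (hle k)
    obtain ⟨p, hp⟩ := exists_lt_of_lt_ciSup (show S / 2 < ⨆ n, |φ n z| by rw [← hS]; linarith)
    have hp0 : 0 < |φ p z| := by linarith
    have hpN : N' ≤ p := by
      by_contra hlt
      rw [hzv p (not_le.mp hlt)] at hp0
      simp at hp0
    set w := |φ p z|⁻¹ • z with hw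
    have hφw : ∀ n, |φ n w| = |φ n z| / |φ p z| := by
      intro n
      rw [hw, map_smul, smul_eq_mul, abs_mul, abs_inv, abs_abs]; field_simp
    have hw2 : ∀ n, |φ n w| ≤ 2 := by
      intro n
      rw [hφw, div_le_iff₀ hp0]
      linarith [hle n]
    have hwp : |φ p w| = 1 := by rw [hφw, div_self hp0.ne']
    have hw0 : ∀ n < N', φ n w = 0 := by
      intro n hn
      rw [hw, map_smul, hzv n hn, smul_zero]
    refine ⟨v + w, Y.add_mem hvY (Y.smul_mem _ hzY), p + 1, ?_, ?_⟩
    · intro n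
      rw [map_add]
      rcases lt_or_ge n N' with h | h
      · rw [hw0 n h, add_zero]; exact hv3 n
      · have := hN₁ n (le_trans (le_max_right _ _) h)
        linarith [abs_add_le (φ n v) (φ n w), hw2 n]
    · rw [Finset.sum_range_succ]
      have h1 : (1:ℝ) / 2 ≤ |φ p (v + w)| := by
        have := hN₁ p (le_trans (le_max_right _ _) hpN)
        rw [map_add]
        have h3 := abs_sub_abs_le_abs_sub (φ p w) (-(φ p v))
        rw [abs_neg, sub_neg_eq_add, add_comm (φ p w)] at h3
        linarith
      have h2 : ∑ n ∈ Finset.range N, |φ n v| ≤ ∑ n ∈ Finset.range p, |φ n (v + w)| := by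
        calc _ = ∑ n ∈ Finset.range N, |φ n (v + w)| := by
              refine Finset.sum_congr rfl fun n hn => ?_
              rw [map_add, hw0 n (lt_of_lt_of_le (Finset.mem_range.mp hn) (le_max_left _ _)), add_zero]
          _ ≤ _ := Finset.sum_le_sum_of_subset_of_nonneg
              (Finset.range_mono (le_trans (le_max_left _ _) hpN)) fun _ _ _ => abs_nonneg _
      push_cast
      linarith

lemma integral_G_rpow_le {a : ℕ → ℝ} (ha : Summable fun n => |a n|) (h3 : ∀ n, |a n| ≤ 3)
    {q : ℝ} (hq : 1 < q) {l : ℝ} (hl : 0 < l) (hs : 0 < ∑' n, |a n|) :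
    ∫ t, |G a t| ^ q ∂μ01 ≤
      (∑' n, |a n|) ^ q * (l / 2 + 3 / (2 * l * ∑' n, |a n|)) := by
  set s := ∑' n, |a n| with hsdef
  have hG := measurable_G ha
  have hGs := abs_G_le ha
  have hi1 : Integrable (fun t => |G a t| ^ q) μ01 := by
    refine integrable_of_bdd (by fun_prop) (s ^ q) fun t => ?_
    rw [abs_of_nonneg (Real.rpow_nonneg (abs_nonneg _) _)]
    exact Real.rpow_le_rpow (abs_nonneg _) (hGs t) (by linarith)
  have hi2 : Integrable (fun t => G a t * G a t) μ01 := by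
    refine integrable_of_bdd (hG.mul hG) (s * s) fun t => ?_
    rw [abs_mul]
    exact mul_le_mul (hGs t) (hGs t) (abs_nonneg _) hs.le
  have hpt : ∀ t, |G a t| ^ q ≤ s ^ q * (l / 2) + s ^ q / (2 * l * s ^ 2) * (G a t * G a t) := by
    intro t
    set h := |G a t| / s with hh
    have hh0 : 0 ≤ h := by positivity
    have hh1 : h ≤ 1 := (div_le_one hs).mpr (hGs t)
    have e : |G a t| = s * h := by rw [hh]; field_simp
    have e2 : G a t * G a t = s ^ 2 * h ^ 2 := by
      rw [← abs_mul_abs_self, e]; ring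
    rw [e2, e, Real.mul_rpow hs.le hh0]
    have e3 : h ^ q ≤ h := by
      calc h ^ q ≤ h ^ (1:ℝ) := Real.rpow_le_rpow_of_exponent_ge' hh0 hh1 zero_le_one hq.le
        _ = h := Real.rpow_one h
    have e4 : h ≤ l / 2 + h ^ 2 / (2 * l) := by
      have : l / 2 + h ^ 2 / (2 * l) - h = (l - h) ^ 2 / (2 * l) := by field_simp; ring
      have : 0 ≤ (l - h) ^ 2 / (2 * l) := by positivity
      linarith
    calc s ^ q * h ^ q ≤ s ^ q * (l / 2 + h ^ 2 / (2 * l)) :=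
          mul_le_mul_of_nonneg_left (e3.trans e4) (Real.rpow_nonneg hs.le _)
      _ = _ := by field_simp
  have hsq : ∑' n, a n * a n ≤ 3 * s := by
    have hle : ∀ n, a n * a n ≤ 3 * |a n| := fun n => by
      rw [← abs_mul_abs_self]
      exact mul_le_mul_of_nonneg_right (h3 n) (abs_nonneg _)
    have hsum := ha.mul_left 3
    rw [hsdef, ← tsum_mul_left]
    exact (Summable.of_nonneg_of_le (fun n => mul_self_nonneg _) hle hsum).tsum_le_tsum hle hsum
  have hsqp : 0 < s ^ q := Real.rpow_pos_of_pos hs q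
  calc _ ≤ ∫ t, (s ^ q * (l / 2) + s ^ q / (2 * l * s ^ 2) * (G a t * G a t)) ∂μ01 :=
        integral_mono hi1 ((integrable_const _).add (hi2.const_mul _)) hpt
    _ = s ^ q * (l / 2) + s ^ q / (2 * l * s ^ 2) * ∑' n, a n * a n := by
        rw [integral_add (integrable_const _) (hi2.const_mul _),
          integral_const_mul _ (fun t => G a t * G a t), integral_G_sq ha]
        simp
    _ ≤ s ^ q * (l / 2) + s ^ q / (2 * l * s ^ 2) * (3 * s) := by gcongr
    _ = _ := by field_simp

lemma strictlySingular_T {q : ℝ} (hq : 1 < q) [Fact (1 ≤ ENNReal.ofReal q)] {A : ℕ → Set ℝ}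
    (hAmeas : ∀ n, MeasurableSet (A n)) (hAdisj : Pairwise fun i j => Disjoint (A i) (A j))
    (T : Lp ℝ 1 μ01 →L[ℝ] Lp ℝ (ENNReal.ofReal q) μ01)
    (hT : ∀ f, (T f : ℝ → ℝ) =ᵐ[μ01] G (cf A f)) : StrictlySingular T := by
  rintro Y - hY ⟨c, hc, hcY⟩
  have hs := fun f => (hasSum_cf_abs hAmeas hAdisj f).1
  have hn := fun f => (hasSum_cf_abs hAmeas hAdisj f).2
  have hinj : ∀ y ∈ Y, y ≠ 0 → ∃ n, cfL A n y ≠ 0 := by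
    intro y hy hy0
    by_contra hcon
    push Not at hcon
    have h0 : T y = 0 := by
      rw [Lp.eq_zero_iff_ae_eq_zero]
      filter_upwards [hT y] with t ht
      rw [ht]
      have : ∀ n, cf A y n = 0 := hcon
      simp [G, this]
    have := hcY y hy
    rw [h0, norm_zero] at this
    have := norm_pos_iff.mpr hy0
    nlinarith [mul_pos hc this]
  set l := c ^ q with hl
  have hlpos : 0 < l := Real.rpow_pos_of_pos hc q
  obtain ⟨m, hm⟩ := exists_nat_gt (2 * (3 / l ^ 2))
  obtain ⟨y, hyY, N, hy3, hyN⟩ := gliding Y hY (cfL A) hs hinj m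
  have hsy : (m : ℝ) / 2 ≤ ∑' n, |cf A y n| :=
    hyN.trans ((hs y).sum_le_tsum _ fun _ _ => abs_nonneg _)
  set s := ∑' n, |cf A y n| with hsdef
  have hs3 : 3 / l ^ 2 < s := by linarith
  have hspos : 0 < s := lt_trans (by positivity) hs3
  have h1 : (c * s) ^ q ≤ s ^ q * (l / 2 + 3 / (2 * l * s)) := by
    calc (c * s) ^ q ≤ ‖T y‖ ^ q := by
          refine Real.rpow_le_rpow (by positivity) ?_ (by linarith)
          exact (mul_le_mul_of_nonneg_left (hn y) hc.le).trans (hcY y hyY)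
      _ = ∫ t, |G (cf A y) t| ^ q ∂μ01 := norm_rpow hq _ (hT y)
      _ ≤ _ := integral_G_rpow_le (hs y) hy3 hq hlpos hspos
  rw [Real.mul_rpow hc.le hspos.le, mul_comm] at h1
  have h2 := le_of_mul_le_mul_left h1 (Real.rpow_pos_of_pos hspos q)
  rw [← hl] at h2
  have h4 : l / 2 ≤ 3 / (2 * l * s) := by linarith
  rw [le_div_iff₀ (by positivity)] at h4
  rw [div_lt_iff₀ (by positivity)] at hs3
  nlinarith

lemma cf_ind {A : ℕ → Set ℝ} (hAmeas : ∀ n, MeasurableSet (A n))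
    (hAdisj : Pairwise fun i j => Disjoint (A i) (A j))
    (hApos : ∀ n, 0 < μ01 (A n)) (k n : ℕ) :
    cf A (indicatorConstLp 1 (hAmeas k) (measure_ne_top μ01 _) (μ01.real (A k))⁻¹) n
      = if n = k then 1 else 0 := by
  unfold cf
  rw [setIntegral_indicatorConstLp (hAmeas n)]
  split_ifs with h
  · subst h
    rw [Set.inter_self, smul_eq_mul, mul_inv_cancel₀]
    exact (ENNReal.toReal_pos (hApos n).ne' (measure_ne_top _ _)).ne'
  · rw [(hAdisj (Ne.symm h)).inter_eq]; simp

lemma not_compact_T {q : ℝ} (hq : 1 < q) [Fact (1 ≤ ENNReal.ofReal q)] {A : ℕ → Set ℝ}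
    (hAmeas : ∀ n, MeasurableSet (A n)) (hAdisj : Pairwise fun i j => Disjoint (A i) (A j))
    (hApos : ∀ n, 0 < μ01 (A n))
    (T : Lp ℝ 1 μ01 →L[ℝ] Lp ℝ (ENNReal.ofReal q) μ01)
    (hT : ∀ f, (T f : ℝ → ℝ) =ᵐ[μ01] G (cf A f)) : ¬ IsCompactOperator (⇑T) := by
  intro hcomp
  let x : ℕ → Lp ℝ 1 μ01 := fun k =>
    indicatorConstLp 1 (hAmeas k) (measure_ne_top μ01 _) (μ01.real (A k))⁻¹
  have hx : ∀ k, ‖x k‖ ≤ 1 := by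
    intro k
    have hpos : 0 < μ01.real (A k) := ENNReal.toReal_pos (hApos k).ne' (measure_ne_top _ _)
    simp only [x]
    rw [norm_indicatorConstLp one_ne_zero ENNReal.one_ne_top]
    simp [abs_of_pos hpos, hpos.ne']
  have hTx : ∀ k, (T (x k) : ℝ → ℝ) =ᵐ[μ01] rademacher (k + 1) := by
    intro k
    filter_upwards [hT (x k)] with t ht
    rw [ht, G]
    simp only [x, cf_ind hAmeas hAdisj hApos]
    simp
  have hsep : ∀ i j, i ≠ j → 1 ≤ ‖T (x i) - T (x j)‖ := by
    intro i j hij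
    set d : ℝ → ℝ := fun t => rademacher (i + 1) t - rademacher (j + 1) t with hd
    have hae : (T (x i) - T (x j) : Lp ℝ (ENNReal.ofReal q) μ01) =ᵐ[μ01] d := by
      filter_upwards [Lp.coeFn_sub (T (x i)) (T (x j)), hTx i, hTx j] with t h1 h2 h3
      rw [h1, Pi.sub_apply, h2, h3]
    have hnorm := norm_rpow hq _ hae
    have hdm : Measurable d := (measurable_rad _).sub (measurable_rad _)
    have hd2 : ∀ t, |d t| ≤ 2 := fun t => by
      have := abs_sub (rademacher (i + 1) t) (rademacher (j + 1) t)
      linarith [abs_rad_le (i + 1) t, abs_rad_le (j + 1) t]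
    have hi1 : Integrable (fun t => |d t| ^ q) μ01 := by
      refine integrable_of_bdd (by fun_prop) (2 ^ q) fun t => ?_
      rw [abs_of_nonneg (Real.rpow_nonneg (abs_nonneg _) _)]
      exact Real.rpow_le_rpow (abs_nonneg _) (hd2 t) (by linarith)
    have hir : ∀ n m, Integrable (fun t => rademacher n t * rademacher m t) μ01 := fun n m =>
      integrable_of_bdd ((measurable_rad _).mul (measurable_rad _)) 1 (abs_rad_mul_le n m)
    have hpt : ∀ t, (1 / 2 : ℝ) * (rademacher (i + 1) t * rademacher (i + 1) t
        + rademacher (j + 1) t * rademacher (j + 1) t)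
        - rademacher (i + 1) t * rademacher (j + 1) t ≤ |d t| ^ q := by
      intro t
      have e : (1 / 2 : ℝ) * (rademacher (i + 1) t * rademacher (i + 1) t
        + rademacher (j + 1) t * rademacher (j + 1) t)
        - rademacher (i + 1) t * rademacher (j + 1) t = |d t| * |d t| / 2 := by
        rw [abs_mul_abs_self, hd]; ring
      rw [e]
      have hcase : |d t| = 0 ∨ 1 ≤ |d t| := by
        simp only [hd]
        rcases rad_cases (i + 1) t with h | h | h <;> rcases rad_cases (j + 1) t with h' | h' | h' <;>
          rw [h, h'] <;> norm_num
      rcases hcase with h | h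
      · rw [h, Real.zero_rpow (by linarith)]; norm_num
      · have : |d t| ≤ |d t| ^ q := by
          simpa using Real.rpow_le_rpow_of_exponent_le h hq.le
        nlinarith [hd2 t]
    have hint := integral_mono ((((hir _ _).add (hir _ _)).const_mul (1 / 2)).sub (hir _ _)) hi1 hpt
    have hval : ∫ t, ((1 / 2 : ℝ) * (rademacher (i + 1) t * rademacher (i + 1) t
        + rademacher (j + 1) t * rademacher (j + 1) t)
        - rademacher (i + 1) t * rademacher (j + 1) t) ∂μ01 = 1 := by
      have hadd : Integrable (fun t => (1 / 2 : ℝ) * (rademacher (i + 1) t * rademacher (i + 1) t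
        + rademacher (j + 1) t * rademacher (j + 1) t)) μ01 :=
        ((hir _ _).add (hir _ _)).const_mul (1 / 2)
      rw [integral_sub hadd (hir _ _),
        integral_const_mul, integral_add (hir _ _) (hir _ _), integral_rad, integral_rad,
        integral_rad, if_pos rfl, if_pos rfl, if_neg hij]
      norm_num
    have h1 : 1 ≤ ‖T (x i) - T (x j)‖ ^ q := by
      rw [hnorm]
      exact hval.symm.le.trans hint
    by_contra hlt
    exact absurd h1 (not_le.mpr (Real.rpow_lt_one (norm_nonneg _) (not_le.mp hlt) (by linarith)))
  obtain ⟨K, hK, hTK⟩ := IsCompactOperator.image_closedBall_subset_compact (𝕜₁ := ℝ)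
    (f := (T : Lp ℝ 1 μ01 →ₗ[ℝ] Lp ℝ (ENNReal.ofReal q) μ01)) hcomp 1
  have hmem : ∀ k, T (x k) ∈ K := fun k => hTK ⟨x k, by simpa using hx k, rfl⟩
  obtain ⟨_, _, φ, hφ, hlim⟩ := hK.tendsto_subseq hmem
  obtain ⟨N, hN⟩ := Metric.cauchySeq_iff'.mp hlim.cauchySeq 1 one_pos
  have h1 := hN (N + 1) (Nat.le_succ N)
  rw [dist_eq_norm] at h1
  exact absurd h1 (not_lt.mpr (hsep _ _ (hφ (Nat.lt_succ_self N)).ne'))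

end S18

/-- Let `(A n)` be pairwise disjoint measurable subsets of `[0,1]` of
positive measure and `1 < q < ∞`. The operator `T : L_1 → L_q` defined by
`T f = ∑ n (∫_{A n} f dμ) r_{n+1}` (with `r_n` the Rademacher functions) is a bounded
linear operator which is not compact and is strictly singular. -/
theorem statement18 (q : ℝ) (hq1 : 1 < q) [Fact (1 ≤ ENNReal.ofReal q)]
    (A : ℕ → Set ℝ) (hAmeas : ∀ n, MeasurableSet (A n))
    (hAsub : ∀ n, A n ⊆ Set.Icc (0:ℝ) 1)
    (hAdisj : Pairwise fun i j => Disjoint (A i) (A j))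
    (hApos : ∀ n, 0 < μ01 (A n)) :
    ∃ T : Lp ℝ 1 μ01 →L[ℝ] Lp ℝ (ENNReal.ofReal q) μ01,
      (∀ f : Lp ℝ 1 μ01, ∀ᵐ t ∂μ01,
        (T f : ℝ → ℝ) t = ∑' n, (∫ x in A n, f x ∂μ01) * rademacher (n + 1) t) ∧
      ¬ IsCompactOperator (⇑T) ∧
      StrictlySingular T := by
  obtain ⟨T, hT⟩ := S18.exists_T (ENNReal.ofReal q) hAmeas hAdisj
  exact ⟨T, hT, S18.not_compact_T hq1 hAmeas hAdisj hApos T hT,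
    S18.strictlySingular_T hq1 hAmeas hAdisj T hT⟩
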